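/- arXiv:math/0101185 — 9 statements merged into one kernel-verified Lean document; each statement's English description precedes it below -/
import Mathlib

section
/- The coefficient of X¹ in the characteristic polynomial det(X·I − M) of the matrix M defined in the context equals R⁴·a²·(ax² + at²) + R²·bx²·(a² + aθ²). -/
/-- The coordinate matrix of the 2-form ω = d(A·η + B·dt) at a point of the plug,
with rows/columns indexed by (θ₁, θ₂, θ₃, x, t); here a = A, aθ = ∂A/∂θ₃,
a_x = ∂A/∂x, a_t = ∂A/∂t, b_x = ∂B/∂x. -/
noncomputable def plugMatrix (R θ₃ a aθ a_x a_t b_x : ℝ) : Matrix (Fin 5) (Fin 5) ℝ :=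
  !![0, 0, -(R * Real.cos θ₃ * aθ - R * a * Real.sin θ₃), -(R * Real.cos θ₃ * a_x),
       -(R * Real.cos θ₃ * a_t);
     0, 0, -(R * Real.sin θ₃ * aθ + R * a * Real.cos θ₃), -(R * Real.sin θ₃ * a_x),
       -(R * Real.sin θ₃ * a_t);
     R * Real.cos θ₃ * aθ - R * a * Real.sin θ₃, R * Real.sin θ₃ * aθ + R * a * Real.cos θ₃,
       0, 0, 0;
     R * Real.cos θ₃ * a_x, R * Real.sin θ₃ * a_x, 0, 0, b_x;
     R * Real.cos θ₃ * a_t, R * Real.sin θ₃ * a_t, 0, -b_x, 0]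

open Polynomial in
theorem charpoly_aux (p q r s u v b : ℝ) :
    (!![0, 0, -p, -r, -u; 0, 0, -q, -s, -v; p, q, 0, 0, 0; r, s, 0, 0, b;
      u, v, 0, -b, 0] : Matrix (Fin 5) (Fin 5) ℝ).charpoly
      = X ^ 5 + C (p^2+q^2+r^2+s^2+u^2+v^2+b^2) * X ^ 3
        + C ((q*b)^2 + (p*b)^2 + (r*v-u*s)^2 + (p*v-u*q)^2 + (p*s-r*q)^2) * X := by
  have hm : (!![0, 0, -p, -r, -u; 0, 0, -q, -s, -v; p, q, 0, 0, 0; r, s, 0, 0, b;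
      u, v, 0, -b, 0] : Matrix (Fin 5) (Fin 5) ℝ).charmatrix
      = !![X, 0, C p, C r, C u; 0, X, C q, C s, C v; -C p, -C q, X, 0, 0;
          -C r, -C s, 0, X, -C b; -C u, -C v, 0, C b, X] := by
    ext1 i j
    fin_cases i <;> fin_cases j <;> simp [Matrix.charmatrix_apply]
  rw [Matrix.charpoly, hm]
  simp only [map_add, map_sub, map_mul, map_pow]
  simp [Matrix.det_succ_row_zero, Fin.sum_univ_succ, Fin.succAbove]
  ring

/-- The coefficient of X¹ in the characteristic polynomial of the plug matrix equals
R⁴·a²·(a_x² + a_t²) + R²·b_x²·(a² + aθ²). -/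
theorem stmt_2 (R θ₃ a aθ a_x a_t b_x : ℝ) :
    (plugMatrix R θ₃ a aθ a_x a_t b_x).charpoly.coeff 1
      = R ^ 4 * a ^ 2 * (a_x ^ 2 + a_t ^ 2) + R ^ 2 * b_x ^ 2 * (a ^ 2 + aθ ^ 2) := by
  rw [plugMatrix, charpoly_aux]
  simp only [Polynomial.coeff_add, Polynomial.coeff_C_mul, Polynomial.coeff_X_pow,
    Polynomial.coeff_X_one]
  have h := Real.sin_sq_add_cos_sq θ₃
  generalize Real.sin θ₃ = s at *
  generalize Real.cos θ₃ = c at *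
  norm_num
  have hs : s ^ 2 = 1 - c ^ 2 := by linarith
  have h4 : s ^ 4 = (1 - c ^ 2) ^ 2 := by rw [← hs]; ring
  ring_nf
  simp only [hs, h4]
  ring
end

section
/- If R ≠ 0, a ≠ 0, and either (ax, at) ≠ (0, 0) or bx ≠ 0, then the matrix M defined in the context has one-dimensional kernel (equivalently, rank 4). -/
/-- If R ≠ 0, a ≠ 0, and either (a_x, a_t) ≠ (0,0) or b_x ≠ 0, then the plug matrix has
one-dimensional kernel. -/
theorem stmt_3 (R θ₃ a aθ a_x a_t b_x : ℝ) (hR : R ≠ 0) (ha : a ≠ 0)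
    (h : (a_x, a_t) ≠ ((0 : ℝ), (0 : ℝ)) ∨ b_x ≠ 0) :
    Module.finrank ℝ (LinearMap.ker (plugMatrix R θ₃ a aθ a_x a_t b_x).mulVecLin) = 1 := by
  have hcs := Real.sin_sq_add_cos_sq θ₃
  have hker : ∀ x : Fin 5 → ℝ, x ∈ LinearMap.ker (plugMatrix R θ₃ a aθ a_x a_t b_x).mulVecLin ↔
      (x 2 = 0 ∧ a_x * x 3 + a_t * x 4 = 0 ∧
       aθ * (Real.cos θ₃ * x 0 + Real.sin θ₃ * x 1)
         + a * (Real.cos θ₃ * x 1 - Real.sin θ₃ * x 0) = 0 ∧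
       R * a_x * (Real.cos θ₃ * x 0 + Real.sin θ₃ * x 1) + b_x * x 4 = 0 ∧
       R * a_t * (Real.cos θ₃ * x 0 + Real.sin θ₃ * x 1) - b_x * x 3 = 0) := by
    intro x
    rw [LinearMap.mem_ker, Matrix.mulVecLin_apply, funext_iff]
    simp only [Fin.forall_fin_succ, plugMatrix, Matrix.mulVec, dotProduct, Fin.sum_univ_five]
    simp
    generalize Real.cos θ₃ = c at *
    generalize Real.sin θ₃ = s at *
    constructor
    · rintro ⟨h0, h1, h2, h3, h4⟩
      have e2 : x 2 = 0 := by
        have : R * a * x 2 = 0 := by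
          linear_combination s * h0 - c * h1 - R * a * x 2 * hcs
        simpa [hR, ha] using this
      refine ⟨e2, ?_, ?_, ?_, ?_⟩
      · apply mul_left_cancel₀ hR
        linear_combination -c * h0 - s * h1 - R * aθ * e2 * (s^2+c^2) - R * (a_x * x 3 + a_t * x 4) * hcs
      · apply mul_left_cancel₀ hR
        linear_combination h2
      · linear_combination h3
      · linear_combination h4
    · rintro ⟨h0, h1, h2, h3, h4⟩
      refine ⟨?_, ?_, ?_, ?_, ?_⟩
      · rw [h0]; linear_combination -R * c * h1
      · rw [h0]; linear_combination -R * s * h1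
      · linear_combination R * h2
      · linear_combination h3
      · linear_combination h4
  generalize Real.cos θ₃ = c at *
  generalize Real.sin θ₃ = s at *
  have hv := (hker ![b_x * (a * c + aθ * s), b_x * (a * s - aθ * c), 0, R * a * a_t, -(R * a * a_x)]).2 (by
    simp
    refine ⟨by ring, by ring, ?_, ?_⟩
    · linear_combination R * a_x * b_x * a * hcs
    · linear_combination R * a_t * b_x * a * hcs)
  rw [finrank_eq_one_iff']
  refine ⟨⟨_, hv⟩, ?_, ?_⟩
  · intro h0
    have h0 := congrArg Subtype.val h0
    have e0 := congrFun h0 0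
    have e1 := congrFun h0 1
    have e3 := congrFun h0 3
    have e4 := congrFun h0 4
    simp [hR, ha] at e0 e1 e3 e4
    have : b_x * a = 0 := by
      have e0' : b_x * (a * c + aθ * s) = 0 := by simpa using e0
      have e1' : b_x * (a * s - aθ * c) = 0 := by simpa using e1
      linear_combination c * e0' + s * e1' - b_x * a * hcs
    simp [ha] at this
    simp [this, e3, e4] at h
  · rintro ⟨x, hx⟩
    obtain ⟨h0, h1, h2, h3, h4⟩ := (hker x).1 hx
    obtain ⟨u, hu⟩ : ∃ u, u = c * x 0 + s * x 1 := ⟨_, rfl⟩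
    obtain ⟨w, hw⟩ : ∃ w, w = c * x 1 - s * x 0 := ⟨_, rfl⟩
    rw [← hu] at h2 h3 h4
    rw [← hw] at h2
    have x0 : x 0 = c * u - s * w := by rw [hu, hw]; linear_combination -x 0 * hcs
    have x1 : x 1 = s * u + c * w := by rw [hu, hw]; linear_combination -x 1 * hcs
    have key : ∃ k : ℝ, k * (a * b_x) = u ∧ k * (R * a * a_t) = x 3 ∧ k * (R * a * a_x) = - x 4 := by
      by_cases hb : b_x = 0
      · subst hb
        have hn : a_x ^ 2 + a_t ^ 2 ≠ 0 := by
          intro hn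
          have q1 : a_x = 0 := by nlinarith
          have q2 : a_t = 0 := by nlinarith
          simp [q1, q2] at h
        have hu0 : u = 0 := by
          have : R * (a_x ^ 2 + a_t ^ 2) * u = 0 := by linear_combination a_x * h3 + a_t * h4
          simpa [hR, hn] using this
        refine ⟨(x 3 * a_t - x 4 * a_x) / (R * a * (a_x ^ 2 + a_t ^ 2)), by simp [hu0], ?_, ?_⟩
        · field_simp
          linear_combination -a_x * h1
        · field_simp
          linear_combination a_t * h1
      · refine ⟨u / (a * b_x), by field_simp, ?_, ?_⟩
        · field_simp
          linear_combination h4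
        · field_simp
          linear_combination h3
    obtain ⟨k, k1, k2, k3⟩ := key
    have k4 : k * (aθ * b_x) = -w := by
      apply mul_left_cancel₀ ha
      linear_combination aθ * k1 + h2
    refine ⟨k, Subtype.ext (funext fun i => ?_)⟩
    fin_cases i
    · simp
      linear_combination c * k1 + s * k4 - x0
    · simp
      linear_combination s * k1 - c * k4 - x1
    · simp [h0]
    · simpa using k2
    · simp
      linear_combination -k3
end

section
/- If R ≠ 0, a ≠ 0, ax ≠ 0, at = 0 and bx = 0, then the kernel of the matrix M defined in the context is exactly the line spanned by the fifth standard basis vector e₅ = (0,0,0,0,1). -/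
/-- If R ≠ 0, a ≠ 0, a_x ≠ 0, a_t = 0 and b_x = 0, then the kernel of the plug matrix
is exactly the line spanned by the fifth standard basis vector (0,0,0,0,1). -/
theorem stmt_4 (R θ₃ a aθ a_x : ℝ) (hR : R ≠ 0) (ha : a ≠ 0) (hax : a_x ≠ 0) :
    LinearMap.ker (plugMatrix R θ₃ a aθ a_x 0 0).mulVecLin
      = Submodule.span ℝ {![(0 : ℝ), 0, 0, 0, 1]} := by
  have hcs := Real.sin_sq_add_cos_sq θ₃
  ext v
  rw [LinearMap.mem_ker, Submodule.mem_span_singleton, Matrix.mulVecLin_apply]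
  constructor
  · intro h
    have e0 := congrFun h 0
    have e1 := congrFun h 1
    have e2 := congrFun h 2
    have e3 := congrFun h 3
    simp [plugMatrix, Matrix.mulVec, dotProduct, Fin.sum_univ_five] at e0 e1 e2 e3
    generalize Real.cos θ₃ = c at *
    generalize Real.sin θ₃ = s at *
    have hRa : R * a ≠ 0 := mul_ne_zero hR ha
    have hRx : R * a_x ≠ 0 := mul_ne_zero hR hax
    have h2 : v 2 = 0 := by
      apply (mul_eq_zero.mp (_ : R * a * v 2 = 0)).resolve_left hRa
      linear_combination s * e0 - c * e1 - R * a * v 2 * hcs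
    have h3 : v 3 = 0 := by
      apply (mul_eq_zero.mp (_ : R * a_x * v 3 = 0)).resolve_left hRx
      rw [h2] at e0 e1
      linear_combination -c * e0 - s * e1 - R * a_x * v 3 * hcs
    have hu : c * v 0 + s * v 1 = 0 := by
      apply (mul_eq_zero.mp (_ : R * a_x * (c * v 0 + s * v 1) = 0)).resolve_left hRx
      linear_combination e3
    have hw : -s * v 0 + c * v 1 = 0 := by
      apply (mul_eq_zero.mp (_ : R * a * (-s * v 0 + c * v 1) = 0)).resolve_left hRa
      linear_combination e2 - R * aθ * hu
    have h0 : v 0 = 0 := by linear_combination c * hu - s * hw - v 0 * hcs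
    have h1 : v 1 = 0 := by linear_combination s * hu + c * hw - v 1 * hcs
    refine ⟨v 4, ?_⟩
    ext i
    fin_cases i <;> simp [h0, h1, h2, h3]
  · rintro ⟨k, rfl⟩
    ext i
    fin_cases i <;> simp [plugMatrix, Matrix.mulVec, dotProduct, Fin.sum_univ_five]
end

section
/- Suppose R ≠ 0, a ≠ 0 and ax ≠ 0. If v ∈ ℝ⁵ satisfies M·v = 0 and its fifth coordinate v₅ = 0, then v = 0. (In other words, wherever a·ax ≠ 0, every nonzero kernel vector of M has nonzero t-component.) -/
/-- Where R ≠ 0, a ≠ 0 and a_x ≠ 0, any kernel vector of the plug matrix whose fifth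
(t-)component vanishes must be zero. -/
theorem stmt_5 (R θ₃ a aθ a_x a_t b_x : ℝ) (hR : R ≠ 0) (ha : a ≠ 0) (hax : a_x ≠ 0) :
    ∀ v : Fin 5 → ℝ, (plugMatrix R θ₃ a aθ a_x a_t b_x).mulVec v = 0 → v 4 = 0 → v = 0 := by
  intro v hv h4
  have e0 := congrFun hv 0
  have e1 := congrFun hv 1
  have e2 := congrFun hv 2
  have e3 := congrFun hv 3
  simp only [plugMatrix, Matrix.mulVec, dotProduct, Fin.sum_univ_five, Pi.zero_apply,
    Matrix.of_apply, Matrix.cons_val, h4] at e0 e1 e2 e3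
  have hcs := Real.sin_sq_add_cos_sq θ₃
  generalize Real.sin θ₃ = s at *
  generalize Real.cos θ₃ = c at *
  have h2 : v 2 = 0 := by
    have : R * a * v 2 = 0 := by linear_combination s * e0 - c * e1 - R * a * v 2 * hcs
    simpa [hR, ha] using this
  rw [h2] at e0 e1
  have h3 : v 3 = 0 := by
    have : R * a_x * v 3 = 0 := by
      linear_combination -c * e0 - s * e1 - R * a_x * v 3 * hcs
    simpa [hR, hax] using this
  have hp : c * v 0 + s * v 1 = 0 := by
    have : R * a_x * (c * v 0 + s * v 1) = 0 := by linear_combination e3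
    simpa [hR, hax] using this
  have hq : c * v 1 - s * v 0 = 0 := by
    have : R * a * (c * v 1 - s * v 0) = 0 := by linear_combination e2 - R * aθ * hp
    simpa [hR, ha] using this
  have h0 : v 0 = 0 := by linear_combination c * hp - s * hq - v 0 * hcs
  have h1 : v 1 = 0 := by linear_combination s * hp + c * hq - v 1 * hcs
  funext i
  fin_cases i <;> assumption
end

section
/- Suppose R ≠ 0, a ≠ 0, bx ≠ 0 and ax = at = aθ = 0. Then the kernel of the matrix M defined in the context is exactly the line spanned by the vector (cos θ₃, sin θ₃, 0, 0, 0). -/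
/-- If R ≠ 0, a ≠ 0, b_x ≠ 0 and a_x = a_t = aθ = 0, then the kernel of the plug matrix
is exactly the line spanned by (cos θ₃, sin θ₃, 0, 0, 0). -/
theorem stmt_6 (R θ₃ a b_x : ℝ) (hR : R ≠ 0) (ha : a ≠ 0) (hbx : b_x ≠ 0) :
    LinearMap.ker (plugMatrix R θ₃ a 0 0 0 b_x).mulVecLin
      = Submodule.span ℝ {![Real.cos θ₃, Real.sin θ₃, 0, 0, 0]} := by
  have hcs := Real.sin_sq_add_cos_sq θ₃
  ext v
  rw [LinearMap.mem_ker, Submodule.mem_span_singleton, Matrix.mulVecLin_apply]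
  constructor
  · intro h
    have h0 := congrFun h 0
    have h1 := congrFun h 1
    have h2 := congrFun h 2
    have h3 := congrFun h 3
    have h4 := congrFun h 4
    simp only [plugMatrix, Matrix.mulVec, dotProduct, Fin.sum_univ_five, Matrix.of_apply,
      Matrix.cons_val, Pi.zero_apply] at h0 h1 h2 h3 h4
    have hRa : R * a ≠ 0 := mul_ne_zero hR ha
    have e2 : v 2 = 0 := by
      apply (mul_eq_zero.mp (?_ : R * a * v 2 = 0)).resolve_left hRa
      linear_combination Real.sin θ₃ * h0 - Real.cos θ₃ * h1 - R * a * v 2 * hcs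
    have e4 : v 4 = 0 := by
      apply (mul_eq_zero.mp (?_ : b_x * v 4 = 0)).resolve_left hbx
      linear_combination h3
    have e3 : v 3 = 0 := by
      apply (mul_eq_zero.mp (?_ : b_x * v 3 = 0)).resolve_left hbx
      linear_combination -h4
    have e : Real.cos θ₃ * v 1 - Real.sin θ₃ * v 0 = 0 := by
      apply (mul_eq_zero.mp (?_ : R * a * _ = 0)).resolve_left hRa
      linear_combination h2
    refine ⟨Real.cos θ₃ * v 0 + Real.sin θ₃ * v 1, ?_⟩
    ext i
    fin_cases i
    · simp
      linear_combination v 0 * hcs + Real.sin θ₃ * e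
    · simp
      linear_combination v 1 * hcs - Real.cos θ₃ * e
    · simp [e2]
    · simp [e3]
    · simp [e4]
  · rintro ⟨c, rfl⟩
    ext i
    fin_cases i <;> simp [plugMatrix, Matrix.mulVec, dotProduct, Fin.sum_univ_five]
    ring
end

section
/- Let E be a real normed vector space and let V : ℝ × E → ℝ × E be a continuous vector field that is locally Lipschitz, written V(t, x) = (V₁(t, x), V₂(t, x)) ∈ ℝ × E, satisfying V₁(−t, x) = V₁(t, x) and V₂(−t, x) = −V₂(t, x) for all (t, x). Let γ = (γ₁, γ₂) : ℝ → ℝ × E be differentiable with γ'(s) = V(γ(s)) for all s ∈ ℝ, and suppose γ₁(s₀) = 0 for some s₀ ∈ ℝ. Then for all s ∈ ℝ, γ₁(s₀ + s) = −γ₁(s₀ − s) and γ₂(s₀ + s) = γ₂(s₀ − s). -/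
open Filter Topology in
theorem unique_aux {F : Type*} [NormedAddCommGroup F] [NormedSpace ℝ F]
    (V : F → F) (hVl : LocallyLipschitz V) (f g : ℝ → F)
    (hf : ∀ s, HasDerivAt f (V (f s)) s) (hg : ∀ s, HasDerivAt g (V (g s)) s)
    (s₀ : ℝ) (h₀ : f s₀ = g s₀) : f = g := by
  have hfc : Continuous f := continuous_iff_continuousAt.2 fun s => (hf s).continuousAt
  have hgc : Continuous g := continuous_iff_continuousAt.2 fun s => (hg s).continuousAt
  have hcl : IsClopen {s | f s = g s} := by
    refine ⟨isClosed_eq hfc hgc, isOpen_iff_mem_nhds.2 fun s hs => ?_⟩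
    have hs' : f s = g s := hs
    obtain ⟨K, t, ht, hK⟩ := hVl (f s)
    exact ODE_solution_unique_of_eventually (v := fun _ => V) (s := fun _ => t) (K := K)
      (Eventually.of_forall fun _ => hK)
      ((hfc.continuousAt.eventually_mem ht).mono fun r hr => ⟨hf r, hr⟩)
      ((hgc.continuousAt.eventually_mem (hs' ▸ ht)).mono fun r hr => ⟨hg r, hr⟩) hs'
  have hu := hcl.eq_univ ⟨s₀, h₀⟩
  funext s
  have : s ∈ {s | f s = g s} := hu ▸ Set.mem_univ s
  exact this

/-- If the continuous, locally Lipschitz vector field V on ℝ × E satisfies the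
time-reversal symmetry V₁(−t,x) = V₁(t,x), V₂(−t,x) = −V₂(t,x), and the solution γ of
γ' = V(γ) satisfies γ₁(s₀) = 0, then γ₁(s₀+s) = −γ₁(s₀−s) and γ₂(s₀+s) = γ₂(s₀−s). -/
theorem stmt_12 {E : Type*} [NormedAddCommGroup E] [NormedSpace ℝ E]
    (V : ℝ × E → ℝ × E) (hVc : Continuous V) (hVl : LocallyLipschitz V)
    (hV₁ : ∀ (t : ℝ) (x : E), (V (-t, x)).1 = (V (t, x)).1)
    (hV₂ : ∀ (t : ℝ) (x : E), (V (-t, x)).2 = -(V (t, x)).2)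
    (γ : ℝ → ℝ × E) (hγ : ∀ s, HasDerivAt γ (V (γ s)) s)
    (s₀ : ℝ) (h₀ : (γ s₀).1 = 0) :
    ∀ s : ℝ, (γ (s₀ + s)).1 = -(γ (s₀ - s)).1 ∧ (γ (s₀ + s)).2 = (γ (s₀ - s)).2 := by
  have hσ : ∀ s, HasDerivAt (fun s => ((-(γ (2 * s₀ - s)).1, (γ (2 * s₀ - s)).2) : ℝ × E))
      (V (-(γ (2 * s₀ - s)).1, (γ (2 * s₀ - s)).2)) s := by
    intro s
    have h := (hγ (2 * s₀ - s)).scomp s ((hasDerivAt_id s).const_sub (2 * s₀))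
    have h1 := ((ContinuousLinearMap.fst ℝ ℝ E).hasFDerivAt.comp_hasDerivAt s h).neg
    have h2 := (ContinuousLinearMap.snd ℝ ℝ E).hasFDerivAt.comp_hasDerivAt s h
    have h3 := h1.prodMk h2
    have e : V (-(γ (2 * s₀ - s)).1, (γ (2 * s₀ - s)).2) = _ :=
      Prod.ext (hV₁ _ _) (hV₂ _ _) (y := ((V (γ (2 * s₀ - s))).1, -(V (γ (2 * s₀ - s))).2))
    rw [e]
    convert h3 using 1
    all_goals first | rfl | simp | (ext <;> simp)
  have key := unique_aux V hVl _ _ hγ hσ s₀ (by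
    have : 2 * s₀ - s₀ = s₀ := by ring
    ext
    · simp [this, h₀]
    · simp [this])
  intro s
  have h := congrFun key (s₀ + s)
  have e : 2 * s₀ - (s₀ + s) = s₀ - s := by ring
  simp only [e] at h
  rw [h]
  exact ⟨rfl, rfl⟩
end

section
/- Let E be a real normed vector space and let V : ℝ × E → ℝ × E be a continuous, locally Lipschitz vector field, written V(t, x) = (V₁(t, x), V₂(t, x)) ∈ ℝ × E, satisfying V₁(−t, x) = V₁(t, x) and V₂(−t, x) = −V₂(t, x) for all (t, x). Let γ = (γ₁, γ₂) : ℝ → ℝ × E be differentiable with γ'(s) = V(γ(s)) for all s ∈ ℝ. Suppose γ₁(s₀) = 0 for some s₀ and γ(s₁) = (−1, p) for some s₁ ∈ ℝ and p ∈ E. Then γ(2s₀ − s₁) = (1, p). -/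
/-- Property (P.3) in concrete form: for a continuous, locally Lipschitz, time-reversal
symmetric vector field V on ℝ × E, a solution γ of γ' = V(γ) that reaches the slice
{t = 0} at time s₀ and passes through (−1, p) at time s₁ must pass through (1, p) at
time 2s₀ − s₁. -/
theorem stmt_13 {E : Type*} [NormedAddCommGroup E] [NormedSpace ℝ E]
    (V : ℝ × E → ℝ × E) (hVc : Continuous V) (hVl : LocallyLipschitz V)
    (hV₁ : ∀ (t : ℝ) (x : E), (V (-t, x)).1 = (V (t, x)).1)
    (hV₂ : ∀ (t : ℝ) (x : E), (V (-t, x)).2 = -(V (t, x)).2)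
    (γ : ℝ → ℝ × E) (hγ : ∀ s, HasDerivAt γ (V (γ s)) s)
    (s₀ : ℝ) (h₀ : (γ s₀).1 = 0)
    (s₁ : ℝ) (p : E) (h₁ : γ s₁ = (-1, p)) :
    γ (2 * s₀ - s₁) = (1, p) := by
  have hc : Continuous γ := continuous_iff_continuousAt.2 fun s => (hγ s).continuousAt
  set δ : ℝ → ℝ × E := fun s => (-(γ (2 * s₀ - s)).1, (γ (2 * s₀ - s)).2) with hδdef
  have hδ : ∀ s, HasDerivAt δ (V (δ s)) s := by
    intro s
    have hl : HasDerivAt (fun s : ℝ => 2 * s₀ - s) (-1) s := by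
      simpa using (hasDerivAt_id s).const_sub (2 * s₀)
    have h := (hγ (2 * s₀ - s)).scomp s hl
    have hf : HasDerivAt (fun s => (γ (2 * s₀ - s)).1) (-(V (γ (2 * s₀ - s))).1) s := by
      simpa [Function.comp_def] using (hasFDerivAt_fst (𝕜 := ℝ) (E := ℝ) (F := E)).comp_hasDerivAt s h
    have hg : HasDerivAt (fun s => (γ (2 * s₀ - s)).2) (-(V (γ (2 * s₀ - s))).2) s := by
      simpa [Function.comp_def] using (hasFDerivAt_snd (𝕜 := ℝ) (E := ℝ) (F := E)).comp_hasDerivAt s h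
    have hh := hf.neg.prodMk hg
    have e : V (δ s) = (- -(V (γ (2 * s₀ - s))).1, -(V (γ (2 * s₀ - s))).2) := by
      apply Prod.ext
      · simp [hδdef, hV₁]
      · simp [hδdef, hV₂]
    rw [e]
    exact hh
  have hδc : Continuous δ := continuous_iff_continuousAt.2 fun s => (hδ s).continuousAt
  have hcl : IsClosed {s | γ s = δ s} := isClosed_eq hc hδc
  have hop : IsOpen {s | γ s = δ s} := by
    rw [isOpen_iff_mem_nhds]
    intro t ht
    obtain ⟨K, U, hU, hK⟩ := hVl (γ t)
    have h1 : ∀ᶠ s in nhds t, γ s ∈ U := hc.continuousAt hU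
    have h2 : ∀ᶠ s in nhds t, δ s ∈ U := by
      apply hδc.continuousAt
      rw [← show γ t = δ t from ht]
      exact hU
    exact ODE_solution_unique_of_eventually (v := fun _ => V) (s := fun _ => U) (K := K)
      (Filter.Eventually.of_forall fun _ => hK)
      (h1.mono fun s hs => ⟨hγ s, hs⟩) (h2.mono fun s hs => ⟨hδ s, hs⟩) ht
  have hne : s₀ ∈ {s | γ s = δ s} := by
    have e : 2 * s₀ - s₀ = s₀ := by ring
    apply Prod.ext
    · simp [hδdef, e, h₀]
    · simp [hδdef, e]
  have hu := IsClopen.eq_univ ⟨hcl, hop⟩ ⟨s₀, hne⟩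
  have hm : (2 * s₀ - s₁) ∈ {s | γ s = δ s} := hu ▸ Set.mem_univ _
  have hm' : γ (2 * s₀ - s₁) = δ (2 * s₀ - s₁) := hm
  rw [hm']
  simp [hδdef, h₁]
end

section
/- Let A : ℝ³ → ℝ and B : ℝ² → ℝ be differentiable functions (with A a function of (θ₃, x, t) and B a function of (x, t)), and let R ∈ ℝ. Define f : ℝ⁵ → ℝ⁶ by f(t, x, θ₁, θ₂, θ₃) = (B(x, t), t, A(θ₃, x, t) − 1, θ₁, θ₂, θ₃), and define the 1-form α on ℝ⁶ (with coordinates (y, t, x, θ₁, θ₂, θ₃)) by α(y, t, x, θ₁, θ₂, θ₃) = y·dt + (1 + x)·(R cos θ₃ · dθ₁ + R sin θ₃ · dθ₂). Then the pullback of α by f equals the 1-form A·(R cos θ₃ · dθ₁ + R sin θ₃ · dθ₂) + B·dt on ℝ⁵; that is, for every point w = (t, x, θ₁, θ₂, θ₃) ∈ ℝ⁵ and every vector v = (v_t, v_x, v_{θ₁}, v_{θ₂}, v_{θ₃}) ∈ ℝ⁵, one has α(f(w))(Df(w)v) = A(θ₃, x, t)·(R cos θ₃ · v_{θ₁} + R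 sin θ₃ · v_{θ₂}) + B(x, t)·v_t, where Df(w) is the Fréchet derivative of f at w. -/
/-- The pullback computation f*(y dt + (1+x)η) = Aη + B dt from the paper, where
η = R cos θ₃ dθ₁ + R sin θ₃ dθ₂. Coordinates on ℝ⁵ are (t, x, θ₁, θ₂, θ₃) (indices
0,…,4) and on ℝ⁶ are (y, t, x, θ₁, θ₂, θ₃) (indices 0,…,5); the map f is
(t, x, θ₁, θ₂, θ₃) ↦ (B(x,t), t, A(θ₃,x,t) − 1, θ₁, θ₂, θ₃). -/
theorem stmt_15 (R : ℝ) (A : ℝ × ℝ × ℝ → ℝ) (B : ℝ × ℝ → ℝ)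
    (hA : Differentiable ℝ A) (hB : Differentiable ℝ B)
    (f : (Fin 5 → ℝ) → (Fin 6 → ℝ))
    (hf : ∀ w : Fin 5 → ℝ,
      f w = ![B (w 1, w 0), w 0, A (w 4, w 1, w 0) - 1, w 2, w 3, w 4])
    (α : (Fin 6 → ℝ) → (Fin 6 → ℝ) → ℝ)
    (hα : ∀ p u : Fin 6 → ℝ,
      α p u = p 0 * u 1 + (1 + p 2) * (R * Real.cos (p 5) * u 3 + R * Real.sin (p 5) * u 4)) :
    ∀ w v : Fin 5 → ℝ,
      α (f w) (fderiv ℝ f w v) =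
        A (w 4, w 1, w 0) * (R * Real.cos (w 4) * v 2 + R * Real.sin (w 4) * v 3)
          + B (w 1, w 0) * v 0 := by
  intro w v
  have hd : DifferentiableAt ℝ f w := by
    rw [differentiableAt_pi]
    intro i
    fin_cases i
    · simp only [hf]
      exact (hB _).comp w (f := fun w : Fin 5 → ℝ => (w 1, w 0)) (by fun_prop)
    · simp only [hf]
      exact differentiableAt_apply (0 : Fin 5) w
    · simp only [hf]
      exact ((hA _).comp w (f := fun w : Fin 5 → ℝ => (w 4, w 1, w 0)) (by fun_prop)).sub_const 1
    · simp only [hf]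
      exact differentiableAt_apply (2 : Fin 5) w
    · simp only [hf]
      exact differentiableAt_apply (3 : Fin 5) w
    · simp only [hf]
      exact differentiableAt_apply (4 : Fin 5) w
  have key : ∀ (i : Fin 6) (j : Fin 5), (∀ z, f z i = z j) → fderiv ℝ f w v i = v j := by
    intro i j h
    have h1 := (hasFDerivAt_pi'.1 hd.hasFDerivAt) i
    have h2 : HasFDerivAt (fun z => f z i)
        (ContinuousLinearMap.proj j : (Fin 5 → ℝ) →L[ℝ] ℝ) w := by
      simp only [h]
      exact hasFDerivAt_apply j w
    have h3 := congrArg (fun L : (Fin 5 → ℝ) →L[ℝ] ℝ => L v) (h1.unique h2)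
    simpa using h3
  rw [hα, key 1 0 (fun z => by rw [hf]; rfl), key 3 2 (fun z => by rw [hf]; rfl),
    key 4 3 (fun z => by rw [hf]; rfl)]
  have e0 : f w 0 = B (w 1, w 0) := by rw [hf]; rfl
  have e2 : f w 2 = A (w 4, w 1, w 0) - 1 := by rw [hf]; rfl
  have e5 : f w 5 = w 4 := by rw [hf]; rfl
  rw [e0, e2, e5]
  ring
end

section
/- Let R ≠ 0 be real, and let a, aθ, ax, at, bx, x be real numbers such that a > 0, 1 + x > 0, ax ≥ 0, and either ax² + at² > 0 or bx ≠ 0. For each τ ∈ [0, 1] set a(τ) = (1 − τ)·a + τ·(1 + x), ax(τ) = (1 − τ)·ax + τ, at(τ) = (1 − τ)·at, aθ(τ) = (1 − τ)·aθ, and bx(τ) = (1 − τ)·bx. Then for every τ ∈ [0, 1], R⁴·a(τ)²·(ax(τ)² + at(τ)²) + R²·bx(τ)²·(a(τ)² + aθ(τ)²) > 0. -/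
/-- Pointwise content of Remark 3.3: along the linear interpolation between the plug
data (A, B) and the boundary data (1 + x, 0), the coefficient of the linear term of the
characteristic polynomial of the coordinate matrix of ω_τ stays positive. -/
theorem stmt_16 (R θ₃ a aθ a_x a_t b_x x : ℝ) (hR : R ≠ 0) (ha : 0 < a)
    (hx : 0 < 1 + x) (hax : 0 ≤ a_x) (h : 0 < a_x ^ 2 + a_t ^ 2 ∨ b_x ≠ 0) :
    ∀ τ ∈ Set.Icc (0 : ℝ) 1,
      0 < R ^ 4 * ((1 - τ) * a + τ * (1 + x)) ^ 2
            * (((1 - τ) * a_x + τ) ^ 2 + ((1 - τ) * a_t) ^ 2)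
          + R ^ 2 * ((1 - τ) * b_x) ^ 2
            * (((1 - τ) * a + τ * (1 + x)) ^ 2 + ((1 - τ) * aθ) ^ 2) := by
  rintro τ ⟨h0, h1⟩
  have h1' : 0 ≤ 1 - τ := by linarith
  have hA : 0 < (1 - τ) * a + τ * (1 + x) := by
    rcases h0.eq_or_lt with h0 | h0
    · subst h0; simpa using ha
    · have := mul_nonneg h1' ha.le
      have := mul_pos h0 hx
      linarith
  rcases h0.eq_or_lt with h0 | h0
  · subst h0
    simp only [sub_zero, one_mul, zero_mul, add_zero]
    rcases h with h | h
    · have : 0 < R ^ 4 * a ^ 2 * (a_x ^ 2 + a_t ^ 2) := by positivity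
      have : 0 ≤ R ^ 2 * b_x ^ 2 * (a ^ 2 + aθ ^ 2) := by positivity
      linarith
    · positivity
  · have hX : 0 < (1 - τ) * a_x + τ := by
      have := mul_nonneg h1' hax
      linarith
    generalize (1 - τ) * a + τ * (1 + x) = A at *
    generalize (1 - τ) * a_x + τ = X at *
    positivity
end
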